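/- Let Δ ≥ 0, 0 ≤ Δ_α ≤ 1/2 and μ, α ∈ ℝ with μ₀ − 2x_α ≤ α ≤ μ₀ + 2x_α. If α + μ < 0, then Δ < (3/2)(8 − 3√5). -/

import Mathlib

/-!
Since `α < -μ`, the lower bound on `α` puts `μ₀` below `2 x_α - μ`, and `x_α` is largest for
`Δ_α = 0`. To the right of `μ₀` the quadratic `Q_v` lies above the line `Δ̃ = 1/2`, so evaluating it
at the slope `2 x₀ - μ = 3 - √5 - μ` bounds `Δ`.
-/

/-- The Hilbert polynomial `P(t) = χ(𝒪(t))` of the projective plane, as a function on `ℝ`. The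
quadratic of a character of slope `μ` and discriminant `Δ` is `Q_v(ν) = P(μ + ν) - Δ`. -/
noncomputable def planeHilbertPoly (t : ℝ) : ℝ := (t ^ 2 + 3 * t + 2) / 2

/-- The slope `μ₀`: the larger of the two slopes at which the quadratic `Q_v` of a character of
slope `μ` and discriminant `Δ` meets the line `Δ̃ = 1/2`. -/
noncomputable def largerHalfSlope (Δ μ : ℝ) : ℝ := (-3 + √(5 + 8 * Δ)) / 2 - μ

/-- The half-width `x_α` of the exceptional interval `I_α`, as a function of the discriminant `Δα`
of the exceptional slope `α`. -/
noncomputable def exceptionalHalfWidth (Δα : ℝ) : ℝ := (3 - √(5 + 8 * Δα)) / 2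

theorem lt_planeHilbertPoly_sub_half_of_largerHalfSlope_lt {Δ μ ν : ℝ}
    (h : largerHalfSlope Δ μ < ν) : Δ < planeHilbertPoly (μ + ν) - 1 / 2 := by
  unfold largerHalfSlope at h
  have hsqrt : √(5 + 8 * Δ) < 2 * (μ + ν) + 3 := by linarith
  have hsq : 5 + 8 * Δ < (2 * (μ + ν) + 3) ^ 2 :=
    (Real.sqrt_lt' ((Real.sqrt_nonneg _).trans_lt hsqrt)).1 hsqrt
  unfold planeHilbertPoly
  linarith

theorem exceptionalHalfWidth_antitone : Antitone exceptionalHalfWidth := by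
  intro a b hab
  unfold exceptionalHalfWidth
  gcongr

theorem planeHilbertPoly_two_mul_exceptionalHalfWidth_zero :
    planeHilbertPoly (2 * exceptionalHalfWidth 0) = 3 / 2 * (8 - 3 * √5) + 1 / 2 := by
  have hsq : √5 ^ 2 = (5 : ℝ) := Real.sq_sqrt (by norm_num)
  simp only [planeHilbertPoly, exceptionalHalfWidth, mul_zero, add_zero]
  linear_combination hsq / 2

theorem stmt_7_general {Δ Δα μ α : ℝ} (hΔα : 0 ≤ Δα)
    (hα : largerHalfSlope Δ μ - 2 * exceptionalHalfWidth Δα ≤ α) (hneg : α + μ < 0) :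
    Δ < 3 / 2 * (8 - 3 * √5) := by
  have hwidth : exceptionalHalfWidth Δα ≤ exceptionalHalfWidth 0 :=
    exceptionalHalfWidth_antitone hΔα
  have hslope : largerHalfSlope Δ μ < 2 * exceptionalHalfWidth 0 - μ := by linarith
  have hΔ := lt_planeHilbertPoly_sub_half_of_largerHalfSlope_lt hslope
  rwa [add_sub_cancel, planeHilbertPoly_two_mul_exceptionalHalfWidth_zero, add_sub_cancel_right]
    at hΔ

/-- with Δ ≥ 0, 0 ≤ Δ_α ≤ 1/2, μ₀ = (−3 + √(5+8Δ))/2 − μ,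
x_α = (3 − √(5+8Δ_α))/2 and μ₀ − 2x_α ≤ α ≤ μ₀ + 2x_α, if α + μ < 0 then
Δ < (3/2)(8 − 3√5). -/
theorem stmt_7 (Δ Δα μ α : ℝ) (hΔ : 0 ≤ Δ) (hΔα₀ : 0 ≤ Δα) (hΔα₁ : Δα ≤ 1/2)
    (h₁ : ((-3 + Real.sqrt (5 + 8 * Δ)) / 2 - μ)
        - 2 * ((3 - Real.sqrt (5 + 8 * Δα)) / 2) ≤ α)
    (h₂ : α ≤ ((-3 + Real.sqrt (5 + 8 * Δ)) / 2 - μ)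
        + 2 * ((3 - Real.sqrt (5 + 8 * Δα)) / 2))
    (hneg : α + μ < 0) :
    Δ < (3/2) * (8 - 3 * Real.sqrt 5) :=
  stmt_7_general hΔα₀ h₁ hneg
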